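/- Let t_min < t_max (with t_max possibly +∞), and let f be twice continuously differentiable on (t_min, t_max) with f'(t) > 0 on (t_min, t_max), f'' of constant sign on (t_min, t_max), lim_{t → t_min⁺} f(t) = −∞, and a (necessarily unique) root t⋆ ∈ (t_min, t_max) with f(t⋆) = 0. Define the modified Newton iteration: t_{k+1} := t_k − f(t_k)/( f'(t_k) + f(t_k)/(t_k − t_min) ) if f(t_k) > 0, and t_{k+1} := t_k − f(t_k)/f'(t_k) otherwise. Then for any starting point t_0 ∈ (t_min, t_max) the sequence (t_k) remains in (t_min, t_max) and converges to t⋆, and the convergence is quadratic: there exists C ≥ 0 such that lim_{k→∞} |t_{k+1} − t⋆|/|t_k − t⋆|² = C whenever t_k ≠ t⋆ for all k. -/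

import Mathlib

/-!
A convex function lies above its tangents, so it cannot tend to `-∞` at a finite point; hence `f` is
concave and lies below its tangents. An ordinary Newton step therefore lands at or to the left of
the root, where the iteration increases and needs no modification any more. As long as `f > 0`, the
modified step is the Newton step for `x ↦ (x - tmin) * f x`, and the iteration decreases towards the
root. In both cases the iterates are eventually those of Newton's method for a function with a
simple root, so they converge quadratically, by Taylor's formula with Peano remainder.
-/

open Filter Set Topology

/-- The Newton step for `f` at `x`, with slope `d x` (usually the derivative of `f` at `x`). It is
`x` itself when `d x = 0`. -/
noncomputable def newtonStep (f d : ℝ → ℝ) (x : ℝ) : ℝ := x - f x / d x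

/-- The Newton step for `f` with derivative `f'` on a domain bounded below by `m`, whose slope is
increased where `f` is positive in order not to step over `m`. -/
noncomputable def modifiedNewtonStep (m : ℝ) (f f' : ℝ → ℝ) (x : ℝ) : ℝ :=
  if 0 < f x then newtonStep f (fun y ↦ f' y + f y / (y - m)) x else newtonStep f f' x

/-- The open interval from `m` to `M` in the real line, where `M` may be infinite. -/
def realIoo (m : ℝ) (M : EReal) : Set ℝ := {x | m < x ∧ (x : EReal) < M}

section Interval

variable {m x : ℝ} {M : EReal}

lemma isOpen_realIoo : IsOpen (realIoo m M) :=
  isOpen_Ioi.inter (isOpen_Iio.preimage continuous_coe_real_ereal)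

lemma Ioc_subset_realIoo (hx : x ∈ realIoo m M) : Ioc m x ⊆ realIoo m M := fun _ hy ↦
  ⟨hy.1, (EReal.coe_le_coe_iff.2 hy.2).trans_lt hx.2⟩

lemma ordConnected_realIoo : (realIoo m M).OrdConnected :=
  ⟨fun _ hx _ hy _ hz ↦ Ioc_subset_realIoo hy ⟨hx.1.trans_le hz.1, hz.2⟩⟩

lemma left_mem_closure_realIoo (hx : x ∈ realIoo m M) : m ∈ closure (realIoo m M) :=
  closure_mono (Ioo_subset_Ioc_self.trans (Ioc_subset_realIoo hx)) <| by
    rw [closure_Ioo hx.1.ne]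
    exact left_mem_Icc.2 hx.1.le

end Interval

section Tangent

variable {s : Set ℝ} {f f' f'' : ℝ → ℝ} {a c m x y : ℝ}

lemma le_add_mul_sub_of_concaveOn (hf : ConcaveOn ℝ s f) (hx : x ∈ s) (hy : y ∈ s)
    (hd : HasDerivAt f c x) : f y ≤ f x + c * (y - x) := by
  rcases lt_trichotomy x y with h | rfl | h
  · have hslope := hf.slope_le_of_hasDerivAt hx hy h hd
    rw [slope_def_field, div_le_iff₀ (sub_pos.2 h)] at hslope
    linarith
  · simp
  · have hslope := hf.le_slope_of_hasDerivAt hy hx h hd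
    rw [slope_def_field, le_div_iff₀ (sub_pos.2 h)] at hslope
    linarith

lemma not_tendsto_atBot_of_convexOn (hf : ConvexOn ℝ s f) (ha : a ∈ s) (hd : HasDerivAt f c a)
    (hm : m ∈ closure s) : ¬ Tendsto f (𝓝[s] m) atBot := by
  intro hbot
  have : (𝓝[s] m).NeBot := mem_closure_iff_nhdsWithin_neBot.1 hm
  have htangent : ∀ y ∈ s, f a + c * (y - a) ≤ f y := fun y hy ↦ by
    have := le_add_mul_sub_of_concaveOn hf.neg ha hy hd.neg
    simp only [Pi.neg_apply] at this
    linarith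
  have hline : Tendsto (fun y ↦ f a + c * (y - a)) (𝓝[s] m) (𝓝 (f a + c * (m - a))) :=
    (Continuous.tendsto (by fun_prop) m).mono_left nhdsWithin_le_nhds
  exact not_tendsto_nhds_of_tendsto_atBot
    (tendsto_atBot_mono' _ (eventually_mem_nhdsWithin.mono htangent) hbot) _ hline

lemma concaveOn_of_tendsto_atBot (hs : Convex ℝ s) (hd : ∀ x ∈ s, HasDerivAt f (f' x) x)
    (hd' : ∀ x ∈ s, HasDerivAt f' (f'' x) x)
    (hsign : (∀ x ∈ s, 0 ≤ f'' x) ∨ (∀ x ∈ s, f'' x ≤ 0)) (hm : m ∈ closure s)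
    (hbot : Tendsto f (𝓝[s] m) atBot) : ConcaveOn ℝ s f := by
  have hc : ContinuousOn f s := fun x hx ↦ (hd x hx).continuousAt.continuousWithinAt
  have hint := interior_subset (s := s)
  rcases hsign with h | h
  · obtain ⟨a, ha⟩ := closure_nonempty_iff.1 ⟨m, hm⟩
    have hconvex : ConvexOn ℝ s f := convexOn_of_hasDerivWithinAt2_nonneg hs hc
      (fun x hx ↦ (hd x (hint hx)).hasDerivWithinAt)
      (fun x hx ↦ (hd' x (hint hx)).hasDerivWithinAt) (fun x hx ↦ h x (hint hx))
    exact absurd hbot (not_tendsto_atBot_of_convexOn hconvex ha (hd a ha) hm)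
  · exact concaveOn_of_hasDerivWithinAt2_nonpos hs hc
      (fun x hx ↦ (hd x (hint hx)).hasDerivWithinAt)
      (fun x hx ↦ (hd' x (hint hx)).hasDerivWithinAt) (fun x hx ↦ h x (hint hx))

lemma antitoneOn_of_concaveOn (hf : ConcaveOn ℝ s f) (hd : ∀ x ∈ s, HasDerivAt f (f' x) x) :
    AntitoneOn f' s :=
  (hf.antitoneOn_deriv fun x hx ↦ (hd x hx).differentiableAt).congr fun x hx ↦ (hd x hx).deriv

lemma strictMonoOn_of_hasDerivAt_pos (hs : Convex ℝ s) (hd : ∀ x ∈ s, HasDerivAt f (f' x) x)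
    (hpos : ∀ x ∈ s, 0 < f' x) : StrictMonoOn f s :=
  strictMonoOn_of_hasDerivWithinAt_pos hs
    (fun x hx ↦ (hd x hx).continuousAt.continuousWithinAt)
    (fun x hx ↦ (hd x (interior_subset hx)).hasDerivWithinAt)
    (fun x hx ↦ hpos x (interior_subset hx))

end Tangent

section Step

variable {s : Set ℝ} {f d f' : ℝ → ℝ} {a m x : ℝ} {M : EReal}

lemma le_newtonStep (hx : f x ≤ 0) (hd : 0 < d x) : x ≤ newtonStep f d x :=
  (le_sub_self_iff x).2 (div_nonpos_of_nonpos_of_nonneg hx hd.le)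

lemma newtonStep_le (hx : 0 ≤ f x) (hd : 0 < d x) : newtonStep f d x ≤ x :=
  sub_le_self x (div_nonneg hx hd.le)

lemma newtonStep_le_root (hf : ConcaveOn ℝ s f) (hx : x ∈ s) (hd : HasDerivAt f (f' x) x)
    (hpos : 0 < f' x) (ha : a ∈ s) (hroot : f a = 0) : newtonStep f f' x ≤ a := by
  have htangent := le_add_mul_sub_of_concaveOn hf hx ha hd
  have : x - a ≤ f x / f' x := by rw [le_div_iff₀ hpos]; linarith
  unfold newtonStep
  linarith

lemma apply_newtonStep_nonpos (hf : ConcaveOn ℝ s f) (hx : x ∈ s) (hd : HasDerivAt f (f' x) x)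
    (hne : f' x ≠ 0) (hstep : newtonStep f f' x ∈ s) : f (newtonStep f f' x) ≤ 0 :=
  calc f (newtonStep f f' x) ≤ f x + f' x * (newtonStep f f' x - x) :=
        le_add_mul_sub_of_concaveOn hf hx hstep hd
    _ = 0 := by unfold newtonStep; field_simp; ring

lemma lt_newtonStep_add_div (hm : m < x) (hx : 0 ≤ f x) (hd : 0 < d x) :
    m < newtonStep f (fun y ↦ d y + f y / (y - m)) x := by
  have hxm : 0 < x - m := sub_pos.2 hm
  have : f x / (d x + f x / (x - m)) < x - m := by
    rw [div_lt_iff₀ (by positivity), mul_add, mul_div_cancel₀ _ hxm.ne']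
    linarith [mul_pos hxm hd]
  unfold newtonStep
  linarith

lemma newtonStep_sub_mul (hm : x ≠ m) :
    newtonStep (fun y ↦ (y - m) * f y) (fun y ↦ f y + (y - m) * d y) x =
      newtonStep f (fun y ↦ d y + f y / (y - m)) x := by
  have hxm : x - m ≠ 0 := sub_ne_zero.2 hm
  have hslope : f x + (x - m) * d x = (x - m) * (d x + f x / (x - m)) := by field_simp; ring
  simp only [newtonStep, hslope, mul_div_mul_left _ _ hxm]

lemma newtonStep_mem_Icc (hf : ConcaveOn ℝ s f) (hx : x ∈ s) (hd : HasDerivAt f (f' x) x)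
    (hpos : 0 < f' x) (ha : a ∈ s) (hroot : f a = 0) (hfx : f x ≤ 0) :
    newtonStep f f' x ∈ Icc x a :=
  ⟨le_newtonStep hfx hpos, newtonStep_le_root hf hx hd hpos ha hroot⟩

lemma modifiedNewtonStep_mem (hf : ConcaveOn ℝ (realIoo m M) f) (hx : x ∈ realIoo m M)
    (hd : HasDerivAt f (f' x) x) (hpos : 0 < f' x) (ha : a ∈ realIoo m M) (hroot : f a = 0) :
    modifiedNewtonStep m f f' x ∈ realIoo m M := by
  unfold modifiedNewtonStep
  split_ifs with hfx
  · have hxm : 0 < x - m := sub_pos.2 hx.1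
    exact Ioc_subset_realIoo hx
      ⟨lt_newtonStep_add_div hx.1 hfx.le hpos, newtonStep_le hfx.le (by positivity)⟩
  · exact ordConnected_realIoo.out hx ha
      (newtonStep_mem_Icc hf hx hd hpos ha hroot (not_lt.1 hfx))

end Step

section Convergence

variable {f d f' : ℝ → ℝ} {K s : Set ℝ} {a m B : ℝ} {u : ℕ → ℝ}

lemma tendsto_root_of_newtonStep (hu : Monotone u ∨ Antitone u) (hK : IsCompact K)
    (huK : ∀ k, u k ∈ K) (hf : ContinuousOn f K) (hinj : InjOn f K) (ha : a ∈ K) (hroot : f a = 0)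
    (hstep : ∀ k, u (k + 1) = newtonStep f d (u k)) (hne : ∀ k, d (u k) ≠ 0)
    (hB : ∀ k, |d (u k)| ≤ B) : Tendsto u atTop (𝓝 a) := by
  have hrange : range u ⊆ K := range_subset_iff.2 huK
  obtain ⟨L, hL⟩ : ∃ L, Tendsto u atTop (𝓝 L) := by
    rcases hu with hu | hu
    · exact ⟨_, tendsto_atTop_ciSup hu (hK.bddAbove.mono hrange)⟩
    · exact ⟨_, tendsto_atTop_ciInf hu (hK.bddBelow.mono hrange)⟩
  have hLK : L ∈ K := hK.isClosed.mem_of_tendsto hL (Eventually.of_forall huK)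
  have hdiff : Tendsto (fun k ↦ u k - u (k + 1)) atTop (𝓝 0) := by
    simpa using hL.sub (hL.comp (tendsto_add_atTop_nat 1))
  have hvalue : ∀ k, d (u k) * (u k - u (k + 1)) = f (u k) := fun k ↦ by
    rw [hstep, newtonStep, sub_sub_cancel, mul_div_cancel₀ _ (hne k)]
  have hzero : Tendsto (fun k ↦ f (u k)) atTop (𝓝 0) :=
    (bdd_le_mul_tendsto_zero' B (Eventually.of_forall hB) hdiff).congr hvalue
  have hfL : Tendsto (fun k ↦ f (u k)) atTop (𝓝 (f L)) :=
    (hf L hLK).tendsto.comp (tendsto_nhdsWithin_iff.2 ⟨hL, Eventually.of_forall huK⟩)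
  have : L = a := hinj hLK ha ((tendsto_nhds_unique hfL hzero).trans hroot.symm)
  exact this ▸ hL

lemma tendsto_root_of_newtonStep_of_nonpos (hf : ConcaveOn ℝ s f)
    (hd : ∀ x ∈ s, HasDerivAt f (f' x) x) (hpos : ∀ x ∈ s, 0 < f' x) (ha : a ∈ s)
    (hroot : f a = 0) (hmem : ∀ k, u k ∈ s) (hnonpos : ∀ k, f (u k) ≤ 0)
    (hstep : ∀ k, u (k + 1) = newtonStep f f' (u k)) : Tendsto u atTop (𝓝 a) := by
  have hmono : StrictMonoOn f s := strictMonoOn_of_hasDerivAt_pos hf.1 hd hpos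
  have hle : ∀ k, u k ≤ a := fun k ↦
    (hmono.le_iff_le (hmem k) ha).1 ((hnonpos k).trans_eq hroot.symm)
  have hu : Monotone u := monotone_nat_of_le_succ fun k ↦
    (le_newtonStep (hnonpos k) (hpos _ (hmem k))).trans_eq (hstep k).symm
  have hK : Icc (u 0) a ⊆ s := hf.1.ordConnected.out (hmem 0) ha
  refine tendsto_root_of_newtonStep (B := f' (u 0)) (.inl hu) isCompact_Icc
    (fun k ↦ ⟨hu k.zero_le, hle k⟩)
    (fun x hx ↦ (hd x (hK hx)).continuousAt.continuousWithinAt) (hmono.injOn.mono hK)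
    ⟨hle 0, le_rfl⟩ hroot hstep (fun k ↦ (hpos _ (hmem k)).ne') fun k ↦ ?_
  rw [abs_of_pos (hpos _ (hmem k))]
  exact antitoneOn_of_concaveOn hf hd (hmem 0) (hmem k) (hu k.zero_le)

lemma tendsto_root_of_newtonStep_of_pos (hf : ConcaveOn ℝ s f)
    (hd : ∀ x ∈ s, HasDerivAt f (f' x) x) (hpos : ∀ x ∈ s, 0 < f' x) (ha : a ∈ s)
    (hroot : f a = 0) (hm : m < a) (hmem : ∀ k, u k ∈ s) (hfu : ∀ k, 0 < f (u k))
    (hstep : ∀ k, u (k + 1) = newtonStep f (fun x ↦ f' x + f x / (x - m)) (u k)) :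
    Tendsto u atTop (𝓝 a) := by
  have hmono : StrictMonoOn f s := strictMonoOn_of_hasDerivAt_pos hf.1 hd hpos
  have hle : ∀ k, a ≤ u k := fun k ↦
    (hmono.le_iff_le ha (hmem k)).1 (hroot.trans_le (hfu k).le)
  have hslope : ∀ k, 0 < f' (u k) + f (u k) / (u k - m) := fun k ↦
    add_pos (hpos _ (hmem k)) (div_pos (hfu k) (sub_pos.2 (hm.trans_le (hle k))))
  have hu : Antitone u := antitone_nat_of_succ_le fun k ↦
    (hstep k).trans_le (newtonStep_le (hfu k).le (hslope k))
  have hK : Icc a (u 0) ⊆ s := hf.1.ordConnected.out ha (hmem 0)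
  refine tendsto_root_of_newtonStep (B := f' a + f (u 0) / (a - m)) (.inr hu) isCompact_Icc
    (fun k ↦ ⟨hle k, hu k.zero_le⟩)
    (fun x hx ↦ (hd x (hK hx)).continuousAt.continuousWithinAt) (hmono.injOn.mono hK)
    ⟨le_rfl, hle 0⟩ hroot hstep (fun k ↦ (hslope k).ne') fun k ↦ ?_
  rw [abs_of_pos (hslope k)]
  exact add_le_add (antitoneOn_of_concaveOn hf hd ha (hmem k) (hle k))
    (div_le_div₀ (hfu 0).le (hmono.monotoneOn (hmem k) (hmem 0) (hu k.zero_le))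
      (sub_pos.2 hm) (sub_le_sub_right (hle k) m))

lemma forall_pos_or_exists_forall_nonpos (hf : ConcaveOn ℝ s f)
    (hd : ∀ x ∈ s, HasDerivAt f (f' x) x) (hpos : ∀ x ∈ s, 0 < f' x) (hmem : ∀ k, u k ∈ s)
    (hstep : ∀ k, u (k + 1) = modifiedNewtonStep m f f' (u k)) :
    (∀ k, 0 < f (u k)) ∨ ∃ N, ∀ k ≥ N, f (u k) ≤ 0 := by
  refine or_iff_not_imp_left.2 fun h ↦ ?_
  obtain ⟨N, hN⟩ := not_forall.1 h
  refine ⟨N, fun k hk ↦ Nat.le_induction (not_lt.1 hN) (fun k _ hfk ↦ ?_) k hk⟩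
  have hnewton : u (k + 1) = newtonStep f f' (u k) := (hstep k).trans (if_neg (not_lt.2 hfk))
  rw [hnewton]
  exact apply_newtonStep_nonpos hf (hmem k) (hd _ (hmem k)) (hpos _ (hmem k)).ne'
    (hnewton ▸ hmem (k + 1))

end Convergence

section Quadratic

variable {f f' : ℝ → ℝ} {a c m : ℝ} {u : ℕ → ℝ}

lemma tendsto_sub_tangent_div_sq (hd : ∀ᶠ x in 𝓝 a, HasDerivAt f (f' x) x)
    (hd' : HasDerivAt f' c a) :
    Tendsto (fun x ↦ (f x - f a - f' a * (x - a)) / (x - a) ^ 2) (𝓝[≠] a) (𝓝 (c / 2)) := by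
  have hf : ContinuousAt f a := hd.self_of_nhds.continuousAt
  refine HasDerivAt.lhopital_zero_nhdsNE (f' := fun x ↦ f' x - f' a)
    (g' := fun x ↦ 2 * (x - a)) ?_ (.of_forall fun x ↦ ?_) ?_ ?_ ?_ ?_
  · filter_upwards [hd.filter_mono nhdsWithin_le_nhds] with x hx
    simpa using (hx.sub_const (f a)).fun_sub (((hasDerivAt_id x).sub_const a).const_mul (f' a))
  · simpa using ((hasDerivAt_id x).sub_const a).fun_pow 2
  · filter_upwards [self_mem_nhdsWithin] with x hx
    exact mul_ne_zero two_ne_zero (sub_ne_zero.2 hx)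
  · have : ContinuousAt (fun x ↦ f x - f a - f' a * (x - a)) a := by fun_prop
    simpa using this.tendsto.mono_left nhdsWithin_le_nhds
  · have : ContinuousAt (fun x ↦ (x - a) ^ 2) a := by fun_prop
    simpa using this.tendsto.mono_left nhdsWithin_le_nhds
  · refine (hd'.tendsto_slope.div_const 2).congr fun x ↦ ?_
    rw [slope_def_field, div_div, mul_comm]

lemma tendsto_newtonStep_sub_div_sq (hd : ∀ᶠ x in 𝓝 a, HasDerivAt f (f' x) x)
    (hd' : HasDerivAt f' c a) (hroot : f a = 0) (hne : f' a ≠ 0) :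
    Tendsto (fun x ↦ (newtonStep f f' x - a) / (x - a) ^ 2) (𝓝[≠] a) (𝓝 (c / 2 / f' a)) := by
  have hf' : Tendsto f' (𝓝[≠] a) (𝓝 (f' a)) :=
    hd'.continuousAt.tendsto.mono_left nhdsWithin_le_nhds
  have hlim := (hd'.tendsto_slope.sub (tendsto_sub_tangent_div_sq hd hd')).div hf' hne
  rw [sub_half] at hlim
  refine hlim.congr' ?_
  filter_upwards [self_mem_nhdsWithin, hf'.eventually_ne hne] with x hx hx'
  have : x - a ≠ 0 := sub_ne_zero.2 hx
  simp only [Pi.div_apply, slope_def_field, newtonStep, hroot]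
  field_simp
  ring

lemma tendsto_abs_sub_div_sq (hd : ∀ᶠ x in 𝓝 a, HasDerivAt f (f' x) x)
    (hd' : HasDerivAt f' c a) (hroot : f a = 0) (hne : f' a ≠ 0) (hu : Tendsto u atTop (𝓝 a))
    (hua : ∀ k, u k ≠ a) (hstep : ∀ᶠ k in atTop, u (k + 1) = newtonStep f f' (u k)) :
    Tendsto (fun k ↦ |u (k + 1) - a| / |u k - a| ^ 2) atTop (𝓝 |c / 2 / f' a|) := by
  have hu' : Tendsto u atTop (𝓝[≠] a) := tendsto_nhdsWithin_iff.2 ⟨hu, .of_forall hua⟩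
  refine ((tendsto_newtonStep_sub_div_sq hd hd' hroot hne).abs.comp hu').congr' ?_
  filter_upwards [hstep] with k hk
  simp only [Function.comp_apply, hk, abs_div, abs_pow]

lemma exists_tendsto_of_newtonStep_add_div (hd : ∀ᶠ x in 𝓝 a, HasDerivAt f (f' x) x)
    (hd' : HasDerivAt f' c a) (hroot : f a = 0) (hne : f' a ≠ 0) (hm : a ≠ m)
    (hu : Tendsto u atTop (𝓝 a)) (hua : ∀ k, u k ≠ a)
    (hstep : ∀ᶠ k in atTop, u (k + 1) = newtonStep f (fun x ↦ f' x + f x / (x - m)) (u k)) :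
    ∃ C, 0 ≤ C ∧ Tendsto (fun k ↦ |u (k + 1) - a| / |u k - a| ^ 2) atTop (𝓝 C) := by
  have hsub : ∀ x, HasDerivAt (fun y ↦ y - m) 1 x := fun x ↦ (hasDerivAt_id x).sub_const m
  have hg : ∀ᶠ x in 𝓝 a, HasDerivAt (fun y ↦ (y - m) * f y) (f x + (x - m) * f' x) x :=
    hd.mono fun x hx ↦ by simpa using (hsub x).fun_mul hx
  have hg' : HasDerivAt (fun x ↦ f x + (x - m) * f' x) (f' a + (f' a + (a - m) * c)) a := by
    simpa using hd.self_of_nhds.fun_add ((hsub a).fun_mul hd')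
  have hslope : f a + (a - m) * f' a ≠ 0 := by
    simpa [hroot] using ⟨sub_ne_zero.2 hm, hne⟩
  refine ⟨_, abs_nonneg _, tendsto_abs_sub_div_sq hg hg' (by simp [hroot]) hslope hu hua ?_⟩
  filter_upwards [hstep, hu.eventually_ne hm] with k hk hkm
  rw [hk, newtonStep_sub_mul hkm]

end Quadratic

theorem stmt17_general {tmin : ℝ} {tmax : EReal} {f f' : ℝ → ℝ} {tstar c : ℝ}
    (hf : ConcaveOn ℝ (realIoo tmin tmax) f)
    (hd : ∀ x ∈ realIoo tmin tmax, HasDerivAt f (f' x) x)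
    (hpos : ∀ x ∈ realIoo tmin tmax, 0 < f' x)
    (hstar : tstar ∈ realIoo tmin tmax) (hroot : f tstar = 0) (hd' : HasDerivAt f' c tstar)
    {t : ℕ → ℝ} (ht0 : t 0 ∈ realIoo tmin tmax)
    (hstep : ∀ k, t (k + 1) = modifiedNewtonStep tmin f f' (t k)) :
    (∀ k, t k ∈ realIoo tmin tmax) ∧ Tendsto t atTop (𝓝 tstar) ∧
    ((∀ k, t k ≠ tstar) →
      ∃ C : ℝ, 0 ≤ C ∧
        Tendsto (fun k ↦ |t (k + 1) - tstar| / |t k - tstar| ^ 2) atTop (𝓝 C)) := by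
  have hmem : ∀ k, t k ∈ realIoo tmin tmax := fun k ↦ by
    induction k with
    | zero => exact ht0
    | succ k hk =>
      rw [hstep k]
      exact modifiedNewtonStep_mem hf hk (hd _ hk) (hpos _ hk) hstar hroot
  have hd_nhds : ∀ᶠ x in 𝓝 tstar, HasDerivAt f (f' x) x :=
    eventually_of_mem (isOpen_realIoo.mem_nhds hstar) hd
  have hne : f' tstar ≠ 0 := (hpos tstar hstar).ne'
  rcases forall_pos_or_exists_forall_nonpos hf hd hpos hmem hstep with hft | ⟨N, hN⟩
  · have hnewton := fun k ↦ (hstep k).trans (if_pos (hft k))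
    have hlim := tendsto_root_of_newtonStep_of_pos hf hd hpos hstar hroot hstar.1 hmem hft hnewton
    exact ⟨hmem, hlim, fun hua ↦ exists_tendsto_of_newtonStep_add_div hd_nhds hd' hroot hne
      hstar.1.ne' hlim hua (.of_forall hnewton)⟩
  · have hnewton := fun k hk ↦ (hstep k).trans (if_neg (hN k hk).not_gt)
    have hlim : Tendsto t atTop (𝓝 tstar) := (tendsto_add_atTop_iff_nat N).1 <|
      tendsto_root_of_newtonStep_of_nonpos hf hd hpos hstar hroot (fun k ↦ hmem (k + N))
        (fun k ↦ hN _ (Nat.le_add_left N k)) fun k ↦ by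
          rw [Nat.add_right_comm, hnewton _ (Nat.le_add_left N k)]
    exact ⟨hmem, hlim, fun hua ↦ ⟨_, abs_nonneg _, tendsto_abs_sub_div_sq hd_nhds hd' hroot hne
      hlim hua (eventually_atTop.2 ⟨N, hnewton⟩)⟩⟩

/-- the modified Newton iteration stays in the domain (t_min, t_max),
converges to the unique root t⋆, and the convergence is quadratic. -/
theorem stmt17 (tmin : ℝ) (tmax : EReal) (hlt : (tmin : EReal) < tmax)
    (D : Set ℝ) (hD : D = {t : ℝ | tmin < t ∧ (t : EReal) < tmax})
    (f f' f'' : ℝ → ℝ)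
    (hd1 : ∀ t ∈ D, HasDerivAt f (f' t) t)
    (hd2 : ∀ t ∈ D, HasDerivAt f' (f'' t) t)
    (hcont : ContinuousOn f'' D)
    (hfp : ∀ t ∈ D, 0 < f' t)
    (hsignconst : (∀ t ∈ D, 0 ≤ f'' t) ∨ (∀ t ∈ D, f'' t ≤ 0))
    (hbot : Filter.Tendsto f (nhdsWithin tmin D) Filter.atBot)
    (tstar : ℝ) (hstar : tstar ∈ D) (hroot : f tstar = 0)
    (t0 : ℝ) (ht0 : t0 ∈ D)
    (t : ℕ → ℝ) (hinit : t 0 = t0)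
    (hrec : ∀ k, t (k + 1) =
        if 0 < f (t k)
        then t k - f (t k) / (f' (t k) + f (t k) / (t k - tmin))
        else t k - f (t k) / f' (t k)) :
    (∀ k, t k ∈ D) ∧ Filter.Tendsto t Filter.atTop (nhds tstar) ∧
    ((∀ k, t k ≠ tstar) →
      ∃ C : ℝ, 0 ≤ C ∧
        Filter.Tendsto (fun k => |t (k + 1) - tstar| / |t k - tstar| ^ 2)
          Filter.atTop (nhds C)) := by
  subst hD hinit
  exact stmt17_general (concaveOn_of_tendsto_atBot ordConnected_realIoo.convex hd1 hd2 hsignconst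
    (left_mem_closure_realIoo hstar) hbot) hd1 hfp hstar hroot (hd2 tstar hstar) ht0 hrec
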